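/- Smooth min-entropy bound: Let X, Z, S be finite sets, let F be a universal-2 hash family of functions from X to S with F drawn uniformly. Then for any probability distribution P_XZ on X × Z, any probability distribution R_Z on Z with supp(P_Z) ⊆ supp(R_Z), and any ε ≥ 0, E_F[d(F|P_XZ)] ≤ 2ε + (1/2) · sqrt(|S| · e^{−H̄_min^ε(P_XZ|R_Z)}). -/

import Mathlib

/-!
The bound is the leftover hash lemma combined with a smoothing argument.

*Leftover hashing* (`expSecurity_le_of_le_mul`). Let `Q` be sub-normalized with `Q(x,z) ≤ M R(z)`,
and let `D_i(s,z)` be the difference between the key distribution under `H i` and the ideal one.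
Expanding the square gives
`∑_s D_i(s,z)² = ∑_{x,x'} Q(x,z) Q(x',z) 1[H_i x = H_i x'] - Q_Z(z)²/|S|`; averaging over `i`, the
universal-2 property cancels the off-diagonal terms against `Q_Z(z)²/|S|` and leaves at most
`∑_x Q(x,z)²`. The Cauchy–Schwarz inequality with weights `R(z)` over all triples `(i,s,z)` turns
this into `E d(F|Q) ≤ (1/2) √(|S| M)`.

*Smoothing* (`security_le_add`). Hashing does not increase variational distance, so replacing `P`
by a `Q` at distance at most `ε` costs at most `ε` for the key distribution and `ε` for the ideal
one.

The entropy `barHminEps` is a real supremum, which takes a default value on unbounded sets. For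
`ε ≥ 1/2` the claim is trivial, since the security is at most `1`. For `ε < 1/2` every admissible
`Q` retains mass at least `1 - 2ε > 0` on the support of `R`, so `max Q/R` is bounded below by a
positive constant: the supremum is a genuine one, and the bound passes from every admissible `Q` to
it by continuity.
-/

open Real Finset

/-- Variational distance `d(P,Q) = (1/2) ∑ |P a - Q a|`. -/
noncomputable def vdist {A : Type*} [Fintype A] (P Q : A → ℝ) : ℝ :=
  (1 / 2) * ∑ a, |P a - Q a|

/-- Sub-normalized non-negative function. -/
def Subnormalized {A : Type*} [Fintype A] (P : A → ℝ) : Prop :=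
  (∀ a, 0 ≤ P a) ∧ ∑ a, P a ≤ 1

/-- Probability distribution on a finite set. -/
def IsDist {A : Type*} [Fintype A] (P : A → ℝ) : Prop :=
  (∀ a, 0 ≤ P a) ∧ ∑ a, P a = 1

/-- Z-marginal `P_Z(z) = ∑_x P(x,z)`. -/
noncomputable def margZ {X Z : Type*} [Fintype X] (P : X × Z → ℝ) : Z → ℝ :=
  fun z => ∑ x, P (x, z)

/-- Key distribution `P_SZ(s,z) = ∑_{x ∈ f⁻¹(s)} P(x,z)`. -/
noncomputable def keyDist {X Z S : Type*} [Fintype X] [DecidableEq S]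
    (f : X → S) (P : X × Z → ℝ) : S × Z → ℝ :=
  fun sz => ∑ x, if f x = sz.1 then P (x, sz.2) else 0

/-- Security `d(f|P_XZ) = d(P_SZ, P_unif × P_Z)`. -/
noncomputable def security {X Z S : Type*} [Fintype X] [Fintype Z] [Fintype S] [DecidableEq S]
    (f : X → S) (P : X × Z → ℝ) : ℝ :=
  vdist (keyDist f P) (fun sz => (Fintype.card S : ℝ)⁻¹ * margZ P sz.2)

/-- Universal-2 hash family indexed by `I`: for `x ≠ x'`,
`Pr[F(x) = F(x')] ≤ 1/|S|` where `F` is uniform on `I`. -/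
def Universal2 {I X S : Type*} [Fintype I] [Fintype S] [DecidableEq S]
    (H : I → X → S) : Prop :=
  ∀ x x' : X, x ≠ x' →
    ((Finset.univ.filter fun i => H i x = H i x').card : ℝ) / (Fintype.card I : ℝ)
      ≤ 1 / (Fintype.card S : ℝ)

/-- Expectation of the security over the uniformly random hash function. -/
noncomputable def expSecurity {I X Z S : Type*} [Fintype I] [Fintype X] [Fintype Z]
    [Fintype S] [DecidableEq S] (H : I → X → S) (P : X × Z → ℝ) : ℝ :=
  (Fintype.card I : ℝ)⁻¹ * ∑ i, security (H i) P

/-- Conditional Rényi entropy of order 2 relative to `R`: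
`H_2(P|R) = -log ∑_{x, z ∈ supp R} P(x,z)² / R(z)`. -/
noncomputable def H2cond {X Z : Type*} [Fintype X] [Fintype Z]
    (P : X × Z → ℝ) (R : Z → ℝ) : ℝ :=
  - Real.log (∑ xz : X × Z, if R xz.2 ≠ 0 then P xz ^ 2 / R xz.2 else 0)

/-- Conditional min-entropy relative to `R`:
`H_min(P|R) = -log max_{x, z ∈ supp R} P(x,z)/R(z)`. -/
noncomputable def Hmin {X Z : Type*} (P : X × Z → ℝ) (R : Z → ℝ) : ℝ :=
  - Real.log (sSup {v : ℝ | ∃ x z, R z ≠ 0 ∧ v = P (x, z) / R z})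

/-- Smooth min-entropy over sub-normalized functions. -/
noncomputable def barHminEps {X Z : Type*} [Fintype X] [Fintype Z] (ε : ℝ)
    (P : X × Z → ℝ) (R : Z → ℝ) : ℝ :=
  sSup {h : ℝ | ∃ Q : X × Z → ℝ, Subnormalized Q ∧ vdist P Q ≤ ε ∧ h = Hmin Q R}

/-- Smooth min-entropy over normalized distributions. -/
noncomputable def HminEps {X Z : Type*} [Fintype X] [Fintype Z] (ε : ℝ)
    (P : X × Z → ℝ) (R : Z → ℝ) : ℝ :=
  sSup {h : ℝ | ∃ Q : X × Z → ℝ, IsDist Q ∧ vdist P Q ≤ ε ∧ h = Hmin Q R}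

/-- Conditional inf-spectral entropy
`H_s^ε(P|R) = sup{r : P{(x,z) : -log(P(x,z)/R(z)) ≤ r} ≤ ε}`. -/
noncomputable def Hspec {X Z : Type*} [Fintype X] [Fintype Z] (ε : ℝ)
    (P : X × Z → ℝ) (R : Z → ℝ) : ℝ :=
  sSup {r : ℝ |
    (∑ xz : X × Z, if - Real.log (P xz / R xz.2) ≤ r then P xz else 0) ≤ ε}

/-- Maximal key length `ℓ(P,ε) = sup{log|S| : ∃ f : X → S, d(f|P) ≤ ε}`. -/
noncomputable def keyLen {X Z : Type*} [Fintype X] [Fintype Z]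
    (P : X × Z → ℝ) (ε : ℝ) : ℝ :=
  sSup {l : ℝ | ∃ m : ℕ, 0 < m ∧ l = Real.log m ∧ ∃ f : X → Fin m, security f P ≤ ε}

/-- `φ(ρ|P) = log ∑_{z ∈ supp P_Z} P_Z(z) (∑_x P_{X|Z}(x|z)^{1/(1-ρ)})^{1-ρ}`. -/
noncomputable def phi {X Z : Type*} [Fintype X] [Fintype Z] (ρ : ℝ) (P : X × Z → ℝ) : ℝ :=
  Real.log (∑ z, if margZ P z ≠ 0 then
    margZ P z * (∑ x, (P (x, z) / margZ P z) ^ ((1 : ℝ) / (1 - ρ))) ^ (1 - ρ) else 0)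

/-- Conditional Rényi entropy of order `1+θ` relative to `R`:
`H_{1+θ}(P|R) = -(1/θ) log ∑_{x, z ∈ supp R} R(z) (P(x,z)/R(z))^{1+θ}`. -/
noncomputable def Hrenyi {X Z : Type*} [Fintype X] [Fintype Z] (θ : ℝ)
    (P : X × Z → ℝ) (R : Z → ℝ) : ℝ :=
  -(1 / θ) * Real.log (∑ xz : X × Z,
    if R xz.2 ≠ 0 then R xz.2 * (P xz / R xz.2) ^ (1 + θ) else 0)

/-- The squared `ℓ²` distance of a key distribution from uniform, for a fixed value of `z`, is its
collision mass minus the uniform contribution. -/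
lemma sum_sq_key_sub {X S : Type*} [Fintype X] [Fintype S] [DecidableEq S] [Nonempty S]
    (f : X → S) (q : X → ℝ) :
    ∑ s, ((∑ x, if f x = s then q x else 0) - (Fintype.card S : ℝ)⁻¹ * ∑ x, q x) ^ 2
      = (∑ x, ∑ x', if f x = f x' then q x * q x' else 0)
        - (Fintype.card S : ℝ)⁻¹ * (∑ x, q x) ^ 2 := by
  have hS : (Fintype.card S : ℝ) ≠ 0 := by
    exact_mod_cast Fintype.card_ne_zero
  have h1 : ∑ s, (∑ x, if f x = s then q x else 0) = ∑ x, q x := by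
    rw [Finset.sum_comm]
    simp
  have h2 : ∑ s, (∑ x, if f x = s then q x else 0) ^ 2
      = ∑ x, ∑ x', if f x = f x' then q x * q x' else 0 := by
    simp_rw [sq, Finset.sum_mul_sum]
    rw [Finset.sum_comm]
    refine Finset.sum_congr rfl fun x _ => ?_
    rw [Finset.sum_comm]
    refine Finset.sum_congr rfl fun x' _ => ?_
    simp only [ite_mul, zero_mul, mul_ite, mul_zero, Finset.sum_ite_eq, Finset.mem_univ, if_true]
  simp_rw [sub_sq, Finset.sum_add_distrib, Finset.sum_sub_distrib, ← Finset.sum_mul,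
    ← Finset.mul_sum]
  rw [h1, h2]
  simp only [Finset.sum_const, Finset.card_univ, nsmul_eq_mul]
  field_simp
  ring

/-- Averaging over a universal-2 family, only the diagonal terms of the collision mass survive. -/
lemma sum_sum_sq_le {I X S : Type*} [Fintype I] [Nonempty I] [Fintype X] [Fintype S]
    [DecidableEq S] [Nonempty S] (H : I → X → S) (hH : Universal2 H) (q : X → ℝ)
    (hq : ∀ x, 0 ≤ q x) :
    ∑ i, ∑ s, ((∑ x, if H i x = s then q x else 0) - (Fintype.card S : ℝ)⁻¹ * ∑ x, q x) ^ 2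
      ≤ Fintype.card I * ∑ x, q x ^ 2 := by
  classical
  have hI : (0 : ℝ) < Fintype.card I := by exact_mod_cast Fintype.card_pos
  have hS : (0 : ℝ) < Fintype.card S := by exact_mod_cast Fintype.card_pos
  simp_rw [sum_sq_key_sub, Finset.sum_sub_distrib]
  have h1 : ∑ i, ∑ x, ∑ x', (if H i x = H i x' then q x * q x' else 0)
      ≤ ∑ x, ∑ x', ((if x = x' then Fintype.card I * q x ^ 2 else 0)
        + Fintype.card I * (Fintype.card S : ℝ)⁻¹ * (q x * q x')) := by
    rw [Finset.sum_comm]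
    refine Finset.sum_le_sum fun x _ => ?_
    rw [Finset.sum_comm]
    refine Finset.sum_le_sum fun x' _ => ?_
    have hqq := mul_nonneg (hq x) (hq x')
    by_cases hx : x = x'
    · subst hx
      simp only [if_true, Finset.sum_const, Finset.card_univ, nsmul_eq_mul]
      have : 0 ≤ Fintype.card I * (Fintype.card S : ℝ)⁻¹ * (q x * q x) := by positivity
      linarith
    · have h := hH x x' hx
      rw [div_le_iff₀ hI] at h
      rw [if_neg hx, zero_add, ← Finset.sum_filter, Finset.sum_const, nsmul_eq_mul]
      refine mul_le_mul_of_nonneg_right (h.trans_eq ?_) hqq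
      rw [one_div, mul_comm]
  refine (sub_le_sub_right h1 _).trans_eq ?_
  simp only [Finset.sum_add_distrib, Finset.sum_ite_eq, Finset.mem_univ, if_true,
    ← Finset.mul_sum, Finset.sum_const, Finset.card_univ, nsmul_eq_mul, sq (∑ x, q x),
    ← Finset.sum_mul]
  ring

/-- The leftover hash lemma: if `Q ≤ M R` pointwise, then the expected security of the hashed key
is at most `(1/2) √(|S| M)`. -/
lemma expSecurity_le_of_le_mul {I X Z S : Type*} [Fintype I] [Nonempty I] [Fintype X]
    [Fintype Z] [Fintype S] [DecidableEq S] [Nonempty S]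
    (H : I → X → S) (hH : Universal2 H) (Q : X × Z → ℝ) (hQ : Subnormalized Q)
    (R : Z → ℝ) (hR : IsDist R) (M : ℝ) (hM0 : 0 ≤ M) (hM : ∀ x z, Q (x, z) ≤ M * R z) :
    expSecurity H Q ≤ (1 / 2) * Real.sqrt (Fintype.card S * M) := by
  have hI : (0 : ℝ) < Fintype.card I := by exact_mod_cast Fintype.card_pos
  set D : I → S → Z → ℝ := fun i s z =>
    (∑ x, if H i x = s then Q (x, z) else 0) - (Fintype.card S : ℝ)⁻¹ * ∑ x, Q (x, z) with hD
  have hDR : ∀ i s z, R z = 0 → D i s z = 0 := by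
    intro i s z hz
    have hQz : ∀ x, Q (x, z) = 0 := fun x =>
      le_antisymm (by simpa [hz] using hM x z) (hQ.1 _)
    simp [hD, hQz]
  have hexp : expSecurity H Q
      = (Fintype.card I : ℝ)⁻¹ * ((1 / 2) * ∑ z, ∑ p : I × S, |D p.1 p.2 z|) := by
    unfold expSecurity security vdist keyDist margZ
    rw [← Finset.mul_sum]
    congr 2
    simp_rw [Fintype.sum_prod_type]
    rw [Finset.sum_comm (s := (Finset.univ : Finset Z))]
    refine Finset.sum_congr rfl fun i _ => ?_
    rw [Finset.sum_comm]
  have hcs : (∑ w : Z × (I × S), |D w.2.1 w.2.2 w.1|) ^ 2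
      ≤ (∑ w : Z × (I × S), R w.1) * ∑ w : Z × (I × S), D w.2.1 w.2.2 w.1 ^ 2 / R w.1 := by
    refine Finset.sum_sq_le_sum_mul_sum_of_sq_le_mul _ (fun w _ => hR.1 _)
      (fun w _ => div_nonneg (sq_nonneg _) (hR.1 _)) fun w _ => ?_
    by_cases hz : R w.1 = 0
    · simp [hz, hDR _ _ _ hz]
    · rw [sq_abs, mul_div_cancel₀ _ hz]
  have h1 : ∑ w : Z × (I × S), R w.1 = Fintype.card I * Fintype.card S := by
    rw [Fintype.sum_prod_type]
    simp [← Finset.mul_sum, hR.2]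
  have h2 : ∑ w : Z × (I × S), D w.2.1 w.2.2 w.1 ^ 2 / R w.1 ≤ Fintype.card I * M := by
    have hz : ∀ z, ∑ p : I × S, D p.1 p.2 z ^ 2 / R z
        ≤ Fintype.card I * (M * ∑ x, Q (x, z)) := by
      intro z
      rw [← Finset.sum_div, Fintype.sum_prod_type]
      refine (div_le_div_of_nonneg_right
        (sum_sum_sq_le H hH (fun x => Q (x, z)) fun x => hQ.1 _) (hR.1 z)).trans ?_
      rw [mul_div_assoc]
      refine mul_le_mul_of_nonneg_left ?_ hI.le
      rw [Finset.sum_div, Finset.mul_sum]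
      refine Finset.sum_le_sum fun x _ => ?_
      refine div_le_of_le_mul₀ (hR.1 z) (mul_nonneg hM0 (hQ.1 _)) ?_
      nlinarith [hM x z, hQ.1 (x, z)]
    rw [Fintype.sum_prod_type]
    refine (Finset.sum_le_sum fun z _ => hz z).trans ?_
    rw [← Finset.mul_sum, ← Finset.mul_sum]
    have hsum : ∑ z, ∑ x, Q (x, z) ≤ 1 := by
      rw [← Fintype.sum_prod_type_right]
      exact hQ.2
    exact mul_le_mul_of_nonneg_left (mul_le_of_le_one_right hM0 hsum) hI.le
  have h3 : ∑ w : Z × (I × S), |D w.2.1 w.2.2 w.1|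
      ≤ Fintype.card I * Real.sqrt (Fintype.card S * M) := by
    refine abs_le_of_sq_le_sq' (hcs.trans ?_) (by positivity) |>.2
    rw [h1, mul_pow, Real.sq_sqrt (by positivity)]
    refine (mul_le_mul_of_nonneg_left h2 (by positivity)).trans_eq ?_
    ring
  rw [Fintype.sum_prod_type] at h3
  rw [hexp, inv_mul_le_iff₀ hI]
  linarith

/-- Replacing `P` by `Q` changes the security by at most twice their distance: once for the key
distribution and once for the ideal distribution. -/
lemma security_le_add {X Z S : Type*} [Fintype X] [Fintype Z] [Fintype S] [DecidableEq S]
    [Nonempty S] (f : X → S) (P Q : X × Z → ℝ) :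
    security f P ≤ security f Q + 2 * vdist P Q := by
  have hS : (Fintype.card S : ℝ) ≠ 0 := by exact_mod_cast Fintype.card_ne_zero
  have h1 : ∑ sz : S × Z, |keyDist f P sz - keyDist f Q sz| ≤ ∑ a, |P a - Q a| := by
    calc _ ≤ ∑ sz : S × Z, ∑ x, (if f x = sz.1 then |P (x, sz.2) - Q (x, sz.2)| else 0) := by
          refine Finset.sum_le_sum fun sz _ => ?_
          unfold keyDist
          rw [← Finset.sum_sub_distrib]
          refine (Finset.abs_sum_le_sum_abs _ _).trans (Finset.sum_le_sum fun x _ => ?_)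
          split_ifs <;> simp
      _ = _ := by
          rw [Fintype.sum_prod_type_right, Fintype.sum_prod_type_right]
          refine Finset.sum_congr rfl fun z _ => ?_
          rw [Finset.sum_comm]
          simp
  have h2 : ∑ sz : S × Z, |(Fintype.card S : ℝ)⁻¹ * margZ P sz.2
      - (Fintype.card S : ℝ)⁻¹ * margZ Q sz.2| ≤ ∑ a, |P a - Q a| := by
    simp_rw [← mul_sub, abs_mul, ← Finset.mul_sum]
    rw [Fintype.sum_prod_type, Fintype.sum_prod_type_right]
    simp only [Finset.sum_const, Finset.card_univ, nsmul_eq_mul]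
    rw [abs_of_nonneg (by positivity), ← mul_assoc, inv_mul_cancel₀ hS, one_mul]
    refine Finset.sum_le_sum fun z _ => ?_
    unfold margZ
    rw [← Finset.sum_sub_distrib]
    exact Finset.abs_sum_le_sum_abs _ _
  have h3 : ∑ sz : S × Z, |keyDist f P sz - (Fintype.card S : ℝ)⁻¹ * margZ P sz.2|
      ≤ ∑ sz : S × Z, (|keyDist f P sz - keyDist f Q sz|
        + |keyDist f Q sz - (Fintype.card S : ℝ)⁻¹ * margZ Q sz.2|
        + |(Fintype.card S : ℝ)⁻¹ * margZ P sz.2 - (Fintype.card S : ℝ)⁻¹ * margZ Q sz.2|) := by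
    refine Finset.sum_le_sum fun sz _ => ?_
    rw [abs_sub_comm ((Fintype.card S : ℝ)⁻¹ * margZ P sz.2)]
    exact (abs_sub_le _ ((Fintype.card S : ℝ)⁻¹ * margZ Q sz.2) _).trans
      (add_le_add_left (abs_sub_le _ (keyDist f Q sz) _) _)
  simp_rw [Finset.sum_add_distrib] at h3
  unfold security vdist
  linarith

lemma expSecurity_le_add {I X Z S : Type*} [Fintype I] [Nonempty I] [Fintype X] [Fintype Z]
    [Fintype S] [DecidableEq S] [Nonempty S] (H : I → X → S) (P Q : X × Z → ℝ) :
    expSecurity H P ≤ expSecurity H Q + 2 * vdist P Q := by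
  have hI : (0 : ℝ) < Fintype.card I := by exact_mod_cast Fintype.card_pos
  unfold expSecurity
  rw [inv_mul_le_iff₀ hI, mul_add, ← mul_assoc, mul_inv_cancel₀ hI.ne', one_mul]
  refine (Finset.sum_le_sum fun i _ => security_le_add (H i) P Q).trans_eq ?_
  rw [Finset.sum_add_distrib, Finset.sum_const, Finset.card_univ, nsmul_eq_mul]

/-- The restriction of `Q` to the support of `R`. -/
noncomputable def restr {X Z : Type*} (R : Z → ℝ) (Q : X × Z → ℝ) : X × Z → ℝ :=
  fun xz => open Classical in if R xz.2 = 0 then 0 else Q xz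

lemma Subnormalized.restr {X Z : Type*} [Fintype X] [Fintype Z] (R : Z → ℝ) {Q : X × Z → ℝ}
    (hQ : Subnormalized Q) : Subnormalized (restr R Q) := by
  have h0 := hQ.1
  refine ⟨fun a => ?_, (Finset.sum_le_sum fun a _ => ?_).trans hQ.2⟩
  · unfold _root_.restr
    split_ifs
    exacts [le_rfl, h0 a]
  · unfold _root_.restr
    split_ifs
    exacts [h0 a, le_rfl]

lemma vdist_restr_le {X Z : Type*} [Fintype X] [Fintype Z] (R : Z → ℝ) (P Q : X × Z → ℝ)
    (hP : ∀ x z, R z = 0 → P (x, z) = 0) : vdist P (restr R Q) ≤ vdist P Q := by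
  unfold vdist
  refine mul_le_mul_of_nonneg_left (Finset.sum_le_sum fun a _ => ?_) (by norm_num)
  obtain ⟨x, z⟩ := a
  unfold restr
  split_ifs with h
  · simp [hP x z h]
  · exact le_rfl

/-- The maximum of `Q/R` over the support of `R`, whose negative logarithm is `Hmin Q R`. -/
noncomputable def maxRatio {X Z : Type*} (Q : X × Z → ℝ) (R : Z → ℝ) : ℝ :=
  sSup {v : ℝ | ∃ x z, R z ≠ 0 ∧ v = Q (x, z) / R z}

lemma restr_le_maxRatio_mul {X Z : Type*} [Finite X] [Finite Z] (Q : X × Z → ℝ) (R : Z → ℝ)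
    (hR : ∀ z, 0 ≤ R z) (x : X) (z : Z) : restr R Q (x, z) ≤ maxRatio Q R * R z := by
  unfold restr
  split_ifs with h
  · have h' : R z = 0 := h
    simp [h']
  · have h' : R z ≠ 0 := h
    have hbdd : BddAbove {v : ℝ | ∃ x z, R z ≠ 0 ∧ v = Q (x, z) / R z} := by
      refine ((Set.finite_range fun a : X × Z => Q a / R a.2).subset ?_).bddAbove
      rintro v ⟨x, z, -, rfl⟩
      exact ⟨(x, z), rfl⟩
    rw [← div_le_iff₀ (lt_of_le_of_ne (hR z) (Ne.symm h'))]
    exact le_csSup hbdd ⟨x, z, h', rfl⟩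

lemma maxRatio_nonneg {X Z : Type*} (Q : X × Z → ℝ) (R : Z → ℝ) (hQ : ∀ a, 0 ≤ Q a)
    (hR : ∀ z, 0 ≤ R z) : 0 ≤ maxRatio Q R := by
  refine Real.sSup_nonneg ?_
  rintro v ⟨x, z, -, rfl⟩
  exact div_nonneg (hQ _) (hR _)

lemma one_sub_le_sum_of_vdist_le {A : Type*} [Fintype A] {P Q : A → ℝ} (hP : IsDist P) {ε : ℝ}
    (h : vdist P Q ≤ ε) : 1 - 2 * ε ≤ ∑ a, Q a := by
  have h1 : ∑ a, (P a - Q a) ≤ ∑ a, |P a - Q a| := Finset.sum_le_sum fun a _ => le_abs_self _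
  rw [Finset.sum_sub_distrib, hP.2] at h1
  unfold vdist at h
  linarith

/-- Smooth min-entropy bound. -/
theorem smooth_min_entropy_bound {I X Z S : Type*} [Fintype I] [Nonempty I] [Fintype X]
    [Fintype Z] [Fintype S] [DecidableEq S]
    (H : I → X → S) (hH : Universal2 H)
    (P : X × Z → ℝ) (hP : IsDist P)
    (R : Z → ℝ) (hR : IsDist R)
    (hsupp : ∀ z, margZ P z ≠ 0 → R z ≠ 0)
    (ε : ℝ) (hε : 0 ≤ ε) :
    expSecurity H P ≤
      2 * ε + (1 / 2) * Real.sqrt ((Fintype.card S : ℝ) * Real.exp (- barHminEps ε P R)) := by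
  have hPR : ∀ x z, R z = 0 → P (x, z) = 0 := by
    intro x z hz
    by_contra hne
    refine hsupp z (fun h0 => hne ?_) hz
    exact (Finset.sum_eq_zero_iff_of_nonneg fun x _ => hP.1 (x, z)).1 h0 x (Finset.mem_univ x)
  have hXZ : Nonempty (X × Z) := by
    by_contra hemp
    rw [not_nonempty_iff] at hemp
    have h1 := hP.2
    simp at h1
  obtain ⟨x₀, -⟩ := hXZ
  have : Nonempty X := ⟨x₀⟩
  have : Nonempty S := ⟨H (Classical.arbitrary I) x₀⟩
  have hX : (0 : ℝ) < Fintype.card X := by exact_mod_cast Fintype.card_pos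
  rcases le_or_gt (1 / 2) ε with hε2 | hε2
  · -- Comparing `P` with `0` shows that the security is at most `1`.
    have h1 := expSecurity_le_add H P (fun _ => 0)
    have h2 : expSecurity H (fun _ : X × Z => (0 : ℝ)) = 0 := by
      simp [expSecurity, security, vdist, keyDist, margZ]
    have h3 : vdist P (fun _ => 0) = 1 / 2 := by
      simp [vdist, abs_of_nonneg (hP.1 _), hP.2]
    have h4 := Real.sqrt_nonneg ((Fintype.card S : ℝ) * Real.exp (- barHminEps ε P R))
    linarith
  · have hmass : ∀ Q : X × Z → ℝ, Subnormalized Q → vdist P Q ≤ ε →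
        (1 - 2 * ε) / Fintype.card X ≤ maxRatio Q R := by
      intro Q hQ hd
      rw [div_le_iff₀ hX]
      refine (one_sub_le_sum_of_vdist_le hP ((vdist_restr_le R P Q hPR).trans hd)).trans ?_
      refine (Finset.sum_le_sum fun a _ => restr_le_maxRatio_mul Q R hR.1 a.1 a.2).trans_eq ?_
      rw [← Finset.mul_sum, Fintype.sum_prod_type]
      simp [hR.2]
    have hpos : 0 < (1 - 2 * ε) / Fintype.card X := div_pos (by linarith) hX
    set T : Set ℝ := {h : ℝ | ∃ Q : X × Z → ℝ, Subnormalized Q ∧ vdist P Q ≤ ε ∧ h = Hmin Q R}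
      with hT
    have hTne : T.Nonempty :=
      ⟨Hmin P R, P, ⟨hP.1, hP.2.le⟩, by simpa [vdist] using hε, rfl⟩
    have hTbdd : BddAbove T := by
      refine ⟨- Real.log ((1 - 2 * ε) / Fintype.card X), ?_⟩
      rintro h ⟨Q, hQ, hd, rfl⟩
      exact neg_le_neg (Real.log_le_log hpos (hmass Q hQ hd))
    have key : ∀ h ∈ T, expSecurity H P
        ≤ 2 * ε + (1 / 2) * Real.sqrt ((Fintype.card S : ℝ) * Real.exp (- h)) := by
      rintro h ⟨Q, hQ, hd, rfl⟩
      have hM : Real.exp (- Hmin Q R) = maxRatio Q R := by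
        unfold Hmin
        rw [neg_neg]
        exact Real.exp_log (hpos.trans_le (hmass Q hQ hd))
      rw [hM]
      have h1 := expSecurity_le_add H P (restr R Q)
      have h2 := vdist_restr_le R P Q hPR
      have h3 := expSecurity_le_of_le_mul H hH (restr R Q) (hQ.restr R) R hR (maxRatio Q R)
        (maxRatio_nonneg Q R hQ.1 hR.1) (restr_le_maxRatio_mul Q R hR.1)
      linarith
    -- The values of `h` satisfying the bound form a closed set, so it contains `sSup T`.
    have hclosed : IsClosed {h : ℝ | expSecurity H P
        ≤ 2 * ε + (1 / 2) * Real.sqrt ((Fintype.card S : ℝ) * Real.exp (- h))} :=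
      isClosed_le continuous_const (by fun_prop)
    exact hclosed.closure_subset_iff.2 key (csSup_mem_closure hTne hTbdd)
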